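/- arXiv:1807.06580 — 2 statements merged into one kernel-verified Lean document; each statement's English description precedes it below -/
import Mathlib

section
/- Nonlinear Cauchy–Kowalevski theorem for ODE: Let U ⊂ ℂ^(k+1) be a neighborhood of the point (x, y, z₁, …, z_{k-1}) and let g : U → ℂ be holomorphic. Then there exists a neighborhood V of x and a unique holomorphic function h : V → ℂ satisfying h^{(k)}(t) = g(t, h(t), h'(t), …, h^{(k-1)}(t)) for all t ∈ V, with initial conditions h(x) = y and h^{(j)}(x) = z_j for j = 1, …, k-1. -/
/-!
The equation of order `k` is rewritten as a first-order system `u' = F (t, u)` for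
`u = (h, h', …, h^{(k-1)})` in `Fin k → ℂ`, and the system is solved by Picard iteration in the
complex domain. On a disc every holomorphic function has a primitive, so the Picard step
`u ↦ y₀ + ∫ F (t, u t) dt` makes sense for holomorphic `u` and returns a holomorphic function; no
path integral has to be chosen. If `F` is `L`-Lipschitz in the second variable and the disc has radius
`r` with `r * L ≤ 1 / 2`, the mean value inequality shows that the step halves uniform distances.
Hence the iterates converge uniformly; the limit is holomorphic by Weierstrass' theorem, and since
the derivatives converge too, it solves the system (`exists_hasDerivAt_of_picard`). The same
halving estimate, applied to two solutions, gives uniqueness (`eqOn_of_picard`).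
-/

open Metric Set Filter Topology

/-! ### Holomorphic first-order systems -/

section Picard

variable {E : Type*} [NormedAddCommGroup E] [NormedSpace ℂ E]

/-- The mean value estimate behind both existence and uniqueness: if `v₁' = F (t, u₁)` and
`v₂' = F (t, u₂)` with `v₁ x = v₂ x`, then `v₁ - v₂` is at most half as large as `u₁ - u₂`. -/
lemma picard_dist_le_half {F : ℂ × E → E} {x : ℂ} {y₀ : E} {r b L : ℝ} (hr : 0 < r)
    (hL0 : 0 ≤ L)
    (hL : ∀ t ∈ ball x r, ∀ y ∈ closedBall y₀ b, ∀ z ∈ closedBall y₀ b,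
      ‖F (t, y) - F (t, z)‖ ≤ L * ‖y - z‖)
    (hrL : r * L ≤ 1 / 2) {u₁ u₂ v₁ v₂ : ℂ → E} {C : ℝ}
    (hu₁ : MapsTo u₁ (ball x r) (closedBall y₀ b))
    (hu₂ : MapsTo u₂ (ball x r) (closedBall y₀ b))
    (hC : ∀ t ∈ ball x r, ‖u₁ t - u₂ t‖ ≤ C)
    (hv₁ : ∀ t ∈ ball x r, HasDerivAt v₁ (F (t, u₁ t)) t)
    (hv₂ : ∀ t ∈ ball x r, HasDerivAt v₂ (F (t, u₂ t)) t)
    (hx : v₁ x = v₂ x) : ∀ t ∈ ball x r, ‖v₁ t - v₂ t‖ ≤ C / 2 := by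
  intro t ht
  have hxm : x ∈ ball x r := mem_ball_self hr
  have hC0 : 0 ≤ C := (norm_nonneg _).trans (hC x hxm)
  have key := (convex_ball x r).norm_image_sub_le_of_norm_hasDerivWithin_le
    (f := fun s => v₁ s - v₂ s) (C := L * C)
    (fun s hs => ((hv₁ s hs).sub (hv₂ s hs)).hasDerivWithinAt)
    (fun s hs => (hL s hs _ (hu₁ hs) _ (hu₂ hs)).trans
      (mul_le_mul_of_nonneg_left (hC s hs) hL0)) hxm ht
  simp only [hx, sub_self, sub_zero] at key
  have htr : ‖t - x‖ ≤ r := (mem_ball_iff_norm.1 ht).le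
  calc ‖v₁ t - v₂ t‖ ≤ L * C * ‖t - x‖ := key
    _ ≤ L * C * r := by gcongr
    _ = (r * L) * C := by ring
    _ ≤ 1 / 2 * C := by gcongr
    _ = C / 2 := by ring

/-- Two solutions with values in a ball of radius `b` differ by at most `2 * b`; halving this bound
repeatedly shows that they agree. -/
lemma eqOn_of_picard {F : ℂ × E → E} {x : ℂ} {y₀ : E} {r b L : ℝ} (hr : 0 < r)
    (hL0 : 0 ≤ L)
    (hL : ∀ t ∈ ball x r, ∀ y ∈ closedBall y₀ b, ∀ z ∈ closedBall y₀ b,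
      ‖F (t, y) - F (t, z)‖ ≤ L * ‖y - z‖)
    (hrL : r * L ≤ 1 / 2) {u v : ℂ → E}
    (hu : MapsTo u (ball x r) (closedBall y₀ b))
    (hv : MapsTo v (ball x r) (closedBall y₀ b))
    (hu' : ∀ t ∈ ball x r, HasDerivAt u (F (t, u t)) t)
    (hv' : ∀ t ∈ ball x r, HasDerivAt v (F (t, v t)) t)
    (hx : u x = v x) : EqOn u v (ball x r) := by
  have key : ∀ n : ℕ, ∀ t ∈ ball x r, ‖u t - v t‖ ≤ 2 * b / 2 ^ n := by
    intro n
    induction n with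
    | zero =>
      intro t ht
      have h1 := mem_closedBall_iff_norm.1 (hu ht)
      have h2 := mem_closedBall_iff_norm.1 (hv ht)
      have h3 := norm_sub_le (u t - y₀) (v t - y₀)
      rw [sub_sub_sub_cancel_right] at h3
      simp only [pow_zero, div_one]
      linarith
    | succ n ih =>
      intro t ht
      have := picard_dist_le_half hr hL0 hL hrL hu hv ih hu' hv' hx t ht
      rwa [div_div, ← pow_succ] at this
  intro t ht
  have hlim : Tendsto (fun n : ℕ => 2 * b / 2 ^ n) atTop (𝓝 0) :=
    tendsto_const_nhds.div_atTop (tendsto_pow_atTop_atTop_of_one_lt one_lt_two)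
  have := ge_of_tendsto' hlim (fun n => key n t ht)
  exact sub_eq_zero.1 (norm_le_zero_iff.1 this)

variable [CompleteSpace E]

/-- One Picard step, with the primitive of `t ↦ F (t, u t)` on the disc in place of an integral. -/
lemma exists_picard_step {F : ℂ × E → E} {x : ℂ} {y₀ : E} {r b M : ℝ} (hr : 0 < r)
    (hd : ∀ t ∈ ball x r, ∀ y ∈ closedBall y₀ b, DifferentiableAt ℂ F (t, y))
    (hM : ∀ t ∈ ball x r, ∀ y ∈ closedBall y₀ b, ‖F (t, y)‖ ≤ M)
    (hrM : r * M ≤ b) {u : ℂ → E} (hu : DifferentiableOn ℂ u (ball x r))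
    (hub : MapsTo u (ball x r) (closedBall y₀ b)) :
    ∃ v : ℂ → E, v x = y₀ ∧ (∀ t ∈ ball x r, HasDerivAt v (F (t, u t)) t) ∧
      MapsTo v (ball x r) (closedBall y₀ b) := by
  have hF : DifferentiableOn ℂ (fun t => F (t, u t)) (ball x r) := fun t ht =>
    ((hd t ht _ (hub ht)).comp t (differentiableAt_id.prodMk
      (hu.differentiableAt (isOpen_ball.mem_nhds ht)))).differentiableWithinAt
  obtain ⟨v, hvx, hv⟩ := hF.isExactOn_ball.with_val_at x y₀
  refine ⟨v, hvx, hv, fun t ht => ?_⟩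
  have hxm : x ∈ ball x r := mem_ball_self hr
  have key := (convex_ball x r).norm_image_sub_le_of_norm_hasDerivWithin_le
    (fun s hs => (hv s hs).hasDerivWithinAt) (fun s hs => hM s hs _ (hub hs)) hxm ht
  have hM0 : 0 ≤ M := (norm_nonneg _).trans (hM x hxm _ (hub hxm))
  have htr : ‖t - x‖ ≤ r := (mem_ball_iff_norm.1 ht).le
  rw [mem_closedBall_iff_norm, ← hvx]
  calc ‖v t - v x‖ ≤ M * ‖t - x‖ := key
    _ ≤ M * r := by gcongr
    _ ≤ b := by linarith

/-- Existence on the disc of radius `r`, by uniform convergence of the Picard iterates starting from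
the constant `y₀`. -/
lemma exists_hasDerivAt_of_picard {F : ℂ × E → E} {x : ℂ} {y₀ : E} {r b L M : ℝ} (hr : 0 < r)
    (hb : 0 ≤ b) (hL0 : 0 ≤ L)
    (hd : ∀ t ∈ ball x r, ∀ y ∈ closedBall y₀ b, DifferentiableAt ℂ F (t, y))
    (hL : ∀ t ∈ ball x r, ∀ y ∈ closedBall y₀ b, ∀ z ∈ closedBall y₀ b,
      ‖F (t, y) - F (t, z)‖ ≤ L * ‖y - z‖)
    (hM : ∀ t ∈ ball x r, ∀ y ∈ closedBall y₀ b, ‖F (t, y)‖ ≤ M)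
    (hrM : r * M ≤ b) (hrL : r * L ≤ 1 / 2) :
    ∃ u : ℂ → E, u x = y₀ ∧ (∀ t ∈ ball x r, HasDerivAt u (F (t, u t)) t) ∧
      MapsTo u (ball x r) (closedBall y₀ b) := by
  have hxm : x ∈ ball x r := mem_ball_self hr
  -- The holomorphic maps on which the Picard step acts, so that it can be iterated.
  let S := {u : ℂ → E // u x = y₀ ∧ DifferentiableOn ℂ u (ball x r) ∧
    MapsTo u (ball x r) (closedBall y₀ b)}
  have step : ∀ u : S, ∃ v : S, ∀ t ∈ ball x r, HasDerivAt v.1 (F (t, u.1 t)) t := by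
    rintro ⟨u, hux, hud, hub⟩
    obtain ⟨v, hvx, hv, hvb⟩ := exists_picard_step hr hd hM hrM hud hub
    exact ⟨⟨v, hvx, fun t ht => (hv t ht).differentiableAt.differentiableWithinAt, hvb⟩, hv⟩
  choose T hT using step
  let u₀ : S := ⟨fun _ => y₀, rfl, differentiableOn_const _, fun _ _ => mem_closedBall_self hb⟩
  let w : ℕ → S := fun n => T^[n] u₀
  have hw : ∀ n, ∀ t ∈ ball x r, HasDerivAt (w (n + 1)).1 (F (t, (w n).1 t)) t := by
    intro n
    have : w (n + 1) = T (w n) := Function.iterate_succ_apply' T n u₀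
    rw [this]
    exact hT _
  have hdist : ∀ n, ∀ t ∈ ball x r, ‖(w n).1 t - (w (n + 1)).1 t‖ ≤ 2 * b / 2 / 2 ^ n := by
    intro n
    induction n with
    | zero =>
      intro t ht
      have h2 := mem_closedBall_iff_norm'.1 ((w 1).2.2.2 ht)
      rw [pow_zero, div_one, mul_div_cancel_left₀ b two_ne_zero]
      exact h2
    | succ n ih =>
      intro t ht
      have := picard_dist_le_half hr hL0 hL hrL (w n).2.2.2 (w (n + 1)).2.2.2 ih (hw n)
        (hw (n + 1)) ((w (n + 1)).2.1.trans (w (n + 2)).2.1.symm) t ht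
      rwa [div_div _ _ (2 : ℝ), ← pow_succ] at this
  have hlim : ∀ t, ∃ y, t ∈ ball x r → Tendsto (fun n => (w n).1 t) atTop (𝓝 y) := by
    intro t
    by_cases ht : t ∈ ball x r
    · obtain ⟨y, hy⟩ := cauchySeq_tendsto_of_complete
        (cauchySeq_of_le_geometric_two (f := fun n => (w n).1 t) (C := 2 * b)
          fun n => (dist_eq_norm _ _).trans_le (hdist n t ht))
      exact ⟨y, fun _ => hy⟩
    · exact ⟨0, fun h => absurd h ht⟩
  choose u hu using hlim
  have hub : MapsTo u (ball x r) (closedBall y₀ b) := fun t ht =>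
    isClosed_closedBall.mem_of_tendsto (hu t ht) (Eventually.of_forall fun n => (w n).2.2.2 ht)
  have hunif : TendstoUniformlyOn (fun n => (w n).1) u atTop (ball x r) := by
    rw [Metric.tendstoUniformlyOn_iff]
    intro ε hε
    have h0 : Tendsto (fun n : ℕ => 2 * b / 2 ^ n) atTop (𝓝 0) :=
      tendsto_const_nhds.div_atTop (tendsto_pow_atTop_atTop_of_one_lt one_lt_two)
    filter_upwards [h0.eventually_lt_const hε] with n hn t ht
    rw [dist_comm]
    exact (dist_le_of_le_geometric_two_of_tendsto (f := fun n => (w n).1 t) (C := 2 * b)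
      (fun n => (dist_eq_norm _ _).trans_le (hdist n t ht)) (hu t ht) n).trans_lt hn
  have hloc := hunif.tendstoLocallyUniformlyOn
  have hev : ∀ᶠ n in atTop, DifferentiableOn ℂ (w n).1 (ball x r) :=
    Eventually.of_forall fun n => (w n).2.2.1
  have hud : DifferentiableOn ℂ u (ball x r) := hloc.differentiableOn hev isOpen_ball
  refine ⟨u, ?_, fun t ht => ?_, hub⟩
  · have : Tendsto (fun n => (w n).1 x) atTop (𝓝 y₀) :=
      tendsto_const_nhds.congr fun n => (w n).2.1.symm
    exact tendsto_nhds_unique (hu x hxm) this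
  · have h1 : Tendsto (fun n => deriv (w (n + 1)).1 t) atTop (𝓝 (deriv u t)) :=
      (tendsto_add_atTop_iff_nat (f := fun n => deriv (w n).1 t) 1).2
        ((hloc.deriv hev isOpen_ball).tendsto_at ht)
    have h2 : Tendsto (fun n => F (t, (w n).1 t)) atTop (𝓝 (F (t, u t))) :=
      (hd t ht _ (hub ht)).continuousAt.tendsto.comp (tendsto_const_nhds.prodMk_nhds (hu t ht))
    have h3 : deriv u t = F (t, u t) :=
      tendsto_nhds_unique h1 (h2.congr fun n => (hw n t ht).deriv.symm)
    rw [← h3]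
    exact (hud.differentiableAt (isOpen_ball.mem_nhds ht)).hasDerivAt

/-- Local existence and uniqueness for a first-order system `u' = F (t, u)` with analytic
right-hand side; `D` is a prescribed neighbourhood of the initial point in which the graph of the
solution stays. -/
lemma exists_local_solution {F : ℂ × E → E} {x : ℂ} {y₀ : E} (hF : AnalyticAt ℂ F (x, y₀))
    {D : Set (ℂ × E)} (hD : D ∈ 𝓝 (x, y₀)) :
    ∃ r > 0, ∃ u : ℂ → E, u x = y₀ ∧
      (∀ t ∈ ball x r, (t, u t) ∈ D ∧ HasDerivAt u (F (t, u t)) t) ∧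
      ∀ v : ℂ → E, v x = y₀ → (∀ᶠ t in 𝓝 x, HasDerivAt v (F (t, v t)) t) → u =ᶠ[𝓝 x] v := by
  obtain ⟨K, s, hs, hK⟩ := (hF.contDiffAt (n := 1)).exists_lipschitzOnWith
  have hMev : ∀ᶠ q in 𝓝 (x, y₀), ‖F q‖ < ‖F (x, y₀)‖ + 1 :=
    hF.continuousAt.norm.eventually_lt_const (lt_add_one _)
  have hdev : ∀ᶠ q in 𝓝 (x, y₀), DifferentiableAt ℂ F q :=
    hF.eventually_analyticAt.mono fun q hq => hq.differentiableAt
  obtain ⟨ε, hε, hsub⟩ := Metric.eventually_nhds_iff_ball.1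
    ((hMev.and hdev).and ((eventually_mem_set.2 hs).and (eventually_mem_set.2 hD)))
  set M := ‖F (x, y₀)‖ + 1 with hMdef
  have hM1 : 0 < M := by positivity
  have hb : 0 < ε / 2 := by positivity
  -- `r * M ≤ ε / 2` keeps the iterates in the closed ball; `r * K ≤ 1 / 2` makes the step contract.
  obtain ⟨r, hr, hrε, hrM, hrL⟩ : ∃ r > 0, r ≤ ε ∧ r * M ≤ ε / 2 ∧ r * K ≤ 1 / 2 := by
    have hK1 : (0 : ℝ) < K + 1 := by positivity
    refine ⟨min ε (min (ε / 2 / M) (1 / 2 / (K + 1))), by positivity, min_le_left _ _, ?_, ?_⟩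
    · exact (le_div_iff₀ hM1).1 ((min_le_right _ _).trans (min_le_left _ _))
    · have h := (le_div_iff₀ hK1).1 ((min_le_right ε _).trans
        (min_le_right (ε / 2 / M) (1 / 2 / ((K : ℝ) + 1))))
      refine le_trans ?_ h
      gcongr
      linarith
  have hmem : ∀ t ∈ ball x r, ∀ y ∈ closedBall y₀ (ε / 2), (t, y) ∈ ball (x, y₀) ε := by
    intro t ht y hy
    rw [← ball_prod_same]
    exact ⟨ball_subset_ball hrε ht, closedBall_subset_ball (by linarith) hy⟩
  have hL : ∀ t ∈ ball x r, ∀ y ∈ closedBall y₀ (ε / 2), ∀ z ∈ closedBall y₀ (ε / 2),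
      ‖F (t, y) - F (t, z)‖ ≤ K * ‖y - z‖ := by
    intro t ht y hy z hz
    have := hK.norm_sub_le (hsub _ (hmem t ht y hy)).2.1 (hsub _ (hmem t ht z hz)).2.1
    simpa [Prod.norm_def] using this
  obtain ⟨u, hux, hu, hub⟩ := exists_hasDerivAt_of_picard hr hb.le K.2
    (fun t ht y hy => (hsub _ (hmem t ht y hy)).1.2) hL
    (fun t ht y hy => (hsub _ (hmem t ht y hy)).1.1.le) hrM hrL
  refine ⟨r, hr, u, hux, fun t ht => ⟨(hsub _ (hmem t ht _ (hub ht))).2.2, hu t ht⟩, ?_⟩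
  intro v hvx hv
  have hvc : ∀ᶠ t in 𝓝 x, v t ∈ closedBall y₀ (ε / 2) := by
    have hc := hv.self_of_nhds.continuousAt
    rw [ContinuousAt, hvx] at hc
    exact hc.eventually_mem (closedBall_mem_nhds _ hb)
  obtain ⟨δ, hδ, hball⟩ := Metric.eventually_nhds_iff_ball.1 (hv.and hvc)
  -- The Lipschitz and contraction bounds persist on the smaller disc where `v` is controlled too.
  have hsub1 : ball x (min r δ) ⊆ ball x r := ball_subset_ball (min_le_left _ _)
  have hsub2 : ball x (min r δ) ⊆ ball x δ := ball_subset_ball (min_le_right _ _)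
  have hr' : 0 < min r δ := lt_min hr hδ
  have heq := eqOn_of_picard hr' K.2 (fun t ht => hL t (hsub1 ht))
    (le_trans (mul_le_mul_of_nonneg_right (min_le_left _ _) K.2) hrL)
    (fun t ht => hub (hsub1 ht)) (fun t ht => (hball t (hsub2 ht)).2)
    (fun t ht => hu t (hsub1 ht)) (fun t ht => (hball t (hsub2 ht)).1) (hux.trans hvx.symm)
  exact heq.eventuallyEq_of_mem (ball_mem_nhds x hr')

end Picard

/-! ### Reduction of the equation of order `k` to a system -/

/-- Right-hand side of the first-order system for `(h, h', …, h^{(k-1)})`: a shift in every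
coordinate but the last, which is `g`. -/
noncomputable def companionField (k : ℕ) (g : (Fin (k + 1) → ℂ) → ℂ) (q : ℂ × (Fin k → ℂ)) :
    Fin k → ℂ :=
  fun j => if hj : (j : ℕ) + 1 < k then q.2 ⟨j + 1, hj⟩ else g (Fin.cons q.1 q.2)

lemma analyticAt_cons {k : ℕ} (q : ℂ × (Fin k → ℂ)) :
    AnalyticAt ℂ (fun q : ℂ × (Fin k → ℂ) => (Fin.cons q.1 q.2 : Fin (k + 1) → ℂ)) q := by
  rw [analyticAt_pi_iff]
  intro i
  refine Fin.cases ?_ (fun j => ?_) i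
  · simpa using analyticAt_fst
  · simp only [Fin.cons_succ]
    exact ((ContinuousLinearMap.proj (R := ℂ) (φ := fun _ : Fin k => ℂ) j).comp
      (ContinuousLinearMap.snd ℂ ℂ (Fin k → ℂ))).analyticAt q

lemma analyticAt_companionField {k : ℕ} {g : (Fin (k + 1) → ℂ) → ℂ} {q : ℂ × (Fin k → ℂ)}
    (hg : AnalyticAt ℂ g (Fin.cons q.1 q.2)) : AnalyticAt ℂ (companionField k g) q := by
  rw [analyticAt_pi_iff]
  intro j
  by_cases hj : (j : ℕ) + 1 < k
  · simp only [companionField, hj, dif_pos]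
    exact ((ContinuousLinearMap.proj (R := ℂ) (φ := fun _ : Fin k => ℂ) ⟨j + 1, hj⟩).comp
      (ContinuousLinearMap.snd ℂ ℂ (Fin k → ℂ))).analyticAt q
  · simp only [companionField, hj, dif_neg, not_false_eq_true]
    exact AnalyticAt.fun_comp (g := g) hg (analyticAt_cons q)

/-- The coordinates of a solution of the first-order system are the successive derivatives of the
zeroth one. -/
lemma iteratedDeriv_of_companion {k : ℕ} (hk : 0 < k) {g : (Fin (k + 1) → ℂ) → ℂ} {s : Set ℂ}
    (hs : IsOpen s) {u : ℂ → Fin k → ℂ}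
    (hu : ∀ t ∈ s, HasDerivAt u (companionField k g (t, u t)) t) :
    ∀ n, ∀ hn : n < k, EqOn (iteratedDeriv n fun t => u t ⟨0, hk⟩) (fun t => u t ⟨n, hn⟩) s := by
  intro n
  induction n with
  | zero => intro hn t _; simp
  | succ n ih =>
    intro hn t ht
    rw [iteratedDeriv_succ, ((ih (by omega)).eventuallyEq_of_mem (hs.mem_nhds ht)).deriv_eq,
      ((hasDerivAt_pi.1 (hu t ht)) ⟨n, by omega⟩).deriv]
    simp [companionField, hn]

/-- The vector of derivatives of a solution of the scalar equation solves the first-order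
system. -/
lemma hasDerivAt_companion {k : ℕ} {g : (Fin (k + 1) → ℂ) → ℂ} {h : ℂ → ℂ} {t : ℂ}
    (ha : AnalyticAt ℂ h t)
    (ht : iteratedDeriv k h t = g (Fin.cons t fun j : Fin k => iteratedDeriv j h t)) :
    HasDerivAt (fun t (j : Fin k) => iteratedDeriv j h t)
      (companionField k g (t, fun j : Fin k => iteratedDeriv j h t)) t := by
  rw [hasDerivAt_pi]
  intro j
  have hd : HasDerivAt (iteratedDeriv j h) (iteratedDeriv (j + 1) h t) t := by
    rw [iteratedDeriv_succ]
    have := ha.iterated_deriv j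
    rw [← iteratedDeriv_eq_iterate] at this
    exact this.differentiableAt.hasDerivAt
  suffices hfield : companionField k g (t, fun j : Fin k => iteratedDeriv j h t) j =
      iteratedDeriv (j + 1) h t by
    rw [hfield]
    exact hd
  by_cases hj : (j : ℕ) + 1 < k
  · simp [companionField, hj]
  · have hjk : (j : ℕ) + 1 = k := by omega
    rw [companionField, dif_neg hj, hjk]
    exact ht.symm

/-- Nonlinear Cauchy–Kowalevski theorem for ODE: if `U ⊂ ℂ^(k+1)` is a
neighborhood of a point `p = (x, y, z₁, …, z_{k-1})` and `g : U → ℂ` is holomorphic, then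
there is a neighborhood `V` of `x = p 0` and a holomorphic function `h : V → ℂ` with
`h^{(k)}(t) = g(t, h(t), h'(t), …, h^{(k-1)}(t))` on `V`, `h(x) = y` and
`h^{(j)}(x) = z_j` for `j = 1, …, k-1`; moreover `h` is unique in the sense that any two
holomorphic solutions of this initial value problem agree near `x`. -/
theorem cauchy_kowalevski_ode (k : ℕ) (hk : 1 ≤ k)
    (U : Set (Fin (k + 1) → ℂ)) (p : Fin (k + 1) → ℂ)
    (hU : U ∈ nhds p) (g : (Fin (k + 1) → ℂ) → ℂ) (hg : AnalyticOnNhd ℂ g U) :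
    ∃ V ∈ nhds (p 0), ∃ h : ℂ → ℂ, AnalyticOnNhd ℂ h V ∧
      (∀ t ∈ V, (fun i : Fin (k + 1) =>
          Fin.cases t (fun j : Fin k => iteratedDeriv (j : ℕ) h t) i) ∈ U) ∧
      (∀ t ∈ V, iteratedDeriv k h t =
        g (fun i : Fin (k + 1) =>
          Fin.cases t (fun j : Fin k => iteratedDeriv (j : ℕ) h t) i)) ∧
      (∀ j : Fin k, iteratedDeriv (j : ℕ) h (p 0) = p j.succ) ∧
      (∀ V' ∈ nhds (p 0), ∀ h' : ℂ → ℂ, AnalyticOnNhd ℂ h' V' →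
        (∀ t ∈ V', iteratedDeriv k h' t =
          g (fun i : Fin (k + 1) =>
            Fin.cases t (fun j : Fin k => iteratedDeriv (j : ℕ) h' t) i)) →
        (∀ j : Fin k, iteratedDeriv (j : ℕ) h' (p 0) = p j.succ) →
        ∃ W ∈ nhds (p 0), Set.EqOn h h' W) := by
  have hcons : ∀ (t : ℂ) (v : Fin k → ℂ),
      (fun i : Fin (k + 1) => (Fin.cases t (fun j : Fin k => v j) i : ℂ)) =
        (Fin.cons t v : Fin (k + 1) → ℂ) := fun _ _ => rfl
  have hp : (Fin.cons (p 0) (fun j : Fin k => p j.succ) : Fin (k + 1) → ℂ) = p :=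
    Fin.cons_self_tail p
  have hk0 : 0 < k := hk
  have hF : AnalyticAt ℂ (companionField k g) (p 0, fun j : Fin k => p j.succ) :=
    analyticAt_companionField (by rw [hp]; exact hg p (mem_of_mem_nhds hU))
  have hD : (fun q : ℂ × (Fin k → ℂ) => (Fin.cons q.1 q.2 : Fin (k + 1) → ℂ)) ⁻¹' U ∈
      𝓝 (p 0, fun j : Fin k => p j.succ) :=
    (analyticAt_cons _).continuousAt.preimage_mem_nhds (by rw [hp]; exact hU)
  obtain ⟨r, hr, u, hux, hu, huniq⟩ := exists_local_solution hF hD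
  have hxm : p 0 ∈ ball (p 0) r := mem_ball_self hr
  have hit := iteratedDeriv_of_companion hk0 isOpen_ball fun t ht => (hu t ht).2
  have hvec : ∀ t ∈ ball (p 0) r,
      (fun j : Fin k => iteratedDeriv j (fun t => u t ⟨0, hk0⟩) t) = u t :=
    fun t ht => funext fun j => hit j j.2 ht
  refine ⟨ball (p 0) r, ball_mem_nhds _ hr, fun t => u t ⟨0, hk0⟩, ?_, ?_, ?_, ?_, ?_⟩
  · refine DifferentiableOn.analyticOnNhd (fun t ht => ?_) isOpen_ball
    exact (hasDerivAt_pi.1 (hu t ht).2 ⟨0, hk0⟩).differentiableAt.differentiableWithinAt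
  · intro t ht
    rw [hcons t fun j : Fin k => iteratedDeriv j (fun t => u t ⟨0, hk0⟩) t, hvec t ht]
    exact (hu t ht).1
  · intro t ht
    rw [hcons t fun j : Fin k => iteratedDeriv j (fun t => u t ⟨0, hk0⟩) t, hvec t ht]
    obtain ⟨m, rfl⟩ : ∃ m, k = m + 1 := ⟨k - 1, by omega⟩
    rw [iteratedDeriv_succ, ((hit m (by omega)).eventuallyEq_of_mem
      (isOpen_ball.mem_nhds ht)).deriv_eq,
      ((hasDerivAt_pi.1 (hu t ht).2) ⟨m, by omega⟩).deriv]
    simp [companionField]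
  · intro j
    exact (hit j j.2 hxm).trans (congrFun hux j)
  · intro V' hV' h' hh' hode hinit
    have hev : ∀ᶠ t in 𝓝 (p 0), HasDerivAt (fun t (j : Fin k) => iteratedDeriv j h' t)
        (companionField k g (t, fun j : Fin k => iteratedDeriv j h' t)) t := by
      filter_upwards [hV'] with t ht
      exact hasDerivAt_companion (hh' t ht) (hode t ht)
    have heq := huniq _ (funext hinit) hev
    refine ⟨_, heq, fun t ht => ?_⟩
    have := congrFun (show u t = _ from ht) ⟨0, hk0⟩
    simpa using this
end

section
/- Lemma (tangency data determines the curve): Let k ≥ 1, let P ∈ ℂ[x,y,z₁,…,z_k], and let γ, γ̃ be irreducible plane curves with k-th order lifts L_k(γ), L_k(γ̃) ⊂ Z(P). Suppose (x,y,z₁,…,z_k) ∈ L_k(γ) ∩ L_k(γ̃), that (x,y) is a smooth point of both γ and γ̃ where neither has vertical tangent, and that ∂P/∂z_k(x,y,z₁,…,z_k) ≠ 0. Then γ = γ̃. -/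
/-!
Write `g`, `g'` for the local graphs of the two curves at the common point `(x, y)`, and
`J g (t) = (t, g(t), …, g⁽ᵏ⁾(t))`. Since the lifts lie in `Z(P)`, both functions satisfy the
implicit differential equation `P(J g(t)) = 0` near `x`, and since the lifts meet over `(x, y)` they
have the same `k`-jet there.

Uniqueness for this equation is obtained without solving for `z_k`. If `u = g - g'` is not
identically zero near `x`, then `u = (t - x)ⁿ v` with `v(x) ≠ 0` and `n > k`, so that
`u⁽ʲ⁾ = (t - x)ⁿ⁻ʲ v_j` with `v_j(x) ≠ 0` for `j ≤ k`. Expanding `P(a) - P(b) = ∑ᵢ Qᵢ(a, b) (aᵢ - bᵢ)`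
with continuous `Qᵢ` satisfying `Qᵢ(a, a) = ∂ᵢP(a)`
(`exists_continuous_difference_quotients`) gives
`0 = ∑ⱼ Q_{z_j}(J g, J g') u⁽ʲ⁾`, in which the term `j = k` has strictly smallest order because
`∂P/∂z_k ≠ 0`; this is a contradiction (`eventuallyEq_of_implicit_ode`).

Hence the curves share the points `(t, g(t))` for all `t` near `x`. By Gauss's lemma, two irreducible
polynomials with common zeros over infinitely many abscissas are associated
(`exists_bezout_of_not_dvd`, `dvd_of_infinite_common_zeros`), so the curves coincide.
-/

open MvPolynomial

/-- `L` is a `k`-th order lift of the plane curve `γ`: wherever `γ` is locally the graph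
of a holomorphic function `g`, the points of `L` over the graph point `(t, g t)` are
exactly `(t, g t, g'(t), …, g^{(k)}(t))`. -/
def IsKthLift (k : ℕ) (γ : Set (Fin 2 → ℂ)) (L : Set (Fin (k + 2) → ℂ)) : Prop :=
  ∀ (x : ℂ) (U : Set (Fin 2 → ℂ)) (V : Set ℂ) (g : ℂ → ℂ),
    IsOpen U → V ∈ nhds x → AnalyticOnNhd ℂ g V →
    γ ∩ U = {q | q ∈ U ∧ q 0 ∈ V ∧ q 1 = g (q 0)} →
    ∀ t ∈ V, ![t, g t] ∈ U →
      ∀ q : Fin (k + 2) → ℂ, q 0 = t → q 1 = g t →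
        (q ∈ L ↔ ∀ j : Fin k, q j.succ.succ = iteratedDeriv ((j : ℕ) + 1) g t)

/-- The difference `P(a) - P(b)` expands along `aᵢ - bᵢ` with coefficients that are continuous in
`(a, b)` and restrict to the partial derivatives of `P` on the diagonal. -/
lemma exists_continuous_difference_quotients {σ : Type*} [Fintype σ] [DecidableEq σ]
    (P : MvPolynomial σ ℂ) :
    ∃ Q : σ → (σ → ℂ) × (σ → ℂ) → ℂ, (∀ i, Continuous (Q i)) ∧
      (∀ a b, eval a P - eval b P = ∑ i, Q i (a, b) * (a i - b i)) ∧
      ∀ i a, Q i (a, a) = eval a (pderiv i P) := by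
  induction P using MvPolynomial.induction_on with
  | C c => exact ⟨fun _ _ => 0, fun _ => continuous_const, by simp, by simp⟩
  | add p r hp hr =>
    obtain ⟨Q, hQc, hQ, hQd⟩ := hp
    obtain ⟨R, hRc, hR, hRd⟩ := hr
    refine ⟨fun i z => Q i z + R i z, fun i => (hQc i).add (hRc i), fun a b => ?_, fun i a => ?_⟩
    · simp only [map_add, add_mul, Finset.sum_add_distrib, ← hQ, ← hR]
      ring
    · simp [hQd, hRd]
  | mul_X p s hp =>
    obtain ⟨Q, hQc, hQ, hQd⟩ := hp
    -- `p(a) a_s - p(b) b_s = (p(a) - p(b)) a_s + p(b) (a_s - b_s)`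
    refine ⟨fun i z => Q i z * z.1 s + if i = s then eval z.2 p else 0, fun i => ?_,
      fun a b => ?_, fun i a => ?_⟩
    · refine ((hQc i).mul ((continuous_apply s).comp continuous_fst)).add ?_
      split_ifs
      · exact (MvPolynomial.continuous_eval p).comp continuous_snd
      · exact continuous_const
    · have h : ∀ i, (Q i (a, b) * a s + if i = s then eval b p else 0) * (a i - b i)
          = a s * (Q i (a, b) * (a i - b i)) + if i = s then eval b p * (a s - b s) else 0 := by
        intro i
        split_ifs with his
        · subst his; ring
        · ring
      simp only [h, Finset.sum_add_distrib, ← Finset.mul_sum, ← hQ]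
      simp
      ring
    · by_cases his : i = s
      · subst his
        simp [hQd]
        ring
      · have : s ≠ i := fun h => his h.symm
        simp [hQd, his, pderiv_X_of_ne this]
        ring

/-- Differentiating lowers the order of vanishing by exactly one, as long as it is positive. -/
lemma iteratedDeriv_eventuallyEq_pow_mul {u v : ℂ → ℂ} {x : ℂ} {n : ℕ} (hv : AnalyticAt ℂ v x)
    (hvx : v x ≠ 0) (hu : u =ᶠ[nhds x] fun t => (t - x) ^ n * v t) (j : ℕ) (hj : j ≤ n) :
    ∃ w : ℂ → ℂ, AnalyticAt ℂ w x ∧ w x ≠ 0 ∧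
      iteratedDeriv j u =ᶠ[nhds x] fun t => (t - x) ^ (n - j) * w t := by
  induction j with
  | zero => exact ⟨v, hv, hvx, by simpa using hu⟩
  | succ j ih =>
    obtain ⟨w, hw, hwx, h⟩ := ih (by omega)
    obtain ⟨m, hm⟩ : ∃ m, n - j = m + 1 := ⟨n - j - 1, by omega⟩
    have hm' : n - (j + 1) = m := by omega
    refine ⟨fun t => (m + 1) * w t + (t - x) * deriv w t,
      (analyticAt_const.mul hw).add ((analyticAt_id.sub analyticAt_const).mul hw.deriv), ?_, ?_⟩
    · have : (m : ℂ) + 1 ≠ 0 := by exact_mod_cast m.succ_ne_zero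
      simp [this, hwx]
    · rw [iteratedDeriv_succ, hm']
      refine h.deriv.trans ?_
      filter_upwards [hw.eventually_analyticAt] with t ht
      have h1 : HasDerivAt (fun t : ℂ => (t - x) ^ (m + 1)) (((m + 1 : ℕ) : ℂ) * (t - x) ^ m * 1) t := by
        exact ((hasDerivAt_id t).sub_const x).pow (m + 1)
      have h2 : HasDerivAt (fun t : ℂ => (t - x) ^ (m + 1) * w t)
          (((m + 1 : ℕ) : ℂ) * (t - x) ^ m * 1 * w t + (t - x) ^ (m + 1) * deriv w t) t :=
        h1.mul ht.differentiableAt.hasDerivAt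
      rw [hm, h2.deriv]
      push_cast
      ring

/-- The `k`-jet `t ↦ (t, g(t), g'(t), …, g⁽ᵏ⁾(t))` of a function. -/
noncomputable def jet (k : ℕ) (g : ℂ → ℂ) (t : ℂ) : Fin (k + 2) → ℂ :=
  Fin.cons t fun i : Fin (k + 1) => iteratedDeriv i g t

lemma continuousAt_jet {k : ℕ} {g : ℂ → ℂ} {x : ℂ} (hg : AnalyticAt ℂ g x) :
    ContinuousAt (jet k g) x := by
  refine continuousAt_pi.2 fun i => ?_
  refine Fin.cases ?_ (fun i => ?_) i
  · exact continuousAt_id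
  · have := (hg.iterated_deriv i).continuousAt
    simpa [jet, iteratedDeriv_eq_iterate] using this

/-- Two solutions of `P(t, g, g', …, g⁽ᵏ⁾) = 0` with the same `k`-jet at `x` agree near `x` if
`∂P/∂z_k` does not vanish at that jet. -/
lemma eventuallyEq_of_implicit_ode {k : ℕ} {P : MvPolynomial (Fin (k + 2)) ℂ} {g g' : ℂ → ℂ}
    {x : ℂ} (hg : AnalyticAt ℂ g x) (hg' : AnalyticAt ℂ g' x) (hjet : jet k g x = jet k g' x)
    (hP : ∀ᶠ t in nhds x, eval (jet k g t) P = 0)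
    (hP' : ∀ᶠ t in nhds x, eval (jet k g' t) P = 0)
    (hPz : eval (jet k g x) (pderiv (Fin.last (k + 1)) P) ≠ 0) :
    ∀ᶠ t in nhds x, g t = g' t := by
  by_contra hne
  set u : ℂ → ℂ := g - g' with hu
  have hua : AnalyticAt ℂ u x := hg.sub hg'
  obtain ⟨n, v, hv, hvx, huv⟩ := hua.exists_eventuallyEq_pow_smul_nonzero_iff.2
    (fun h => hne (h.mono fun t ht => sub_eq_zero.1 ht))
  have huv' : u =ᶠ[nhds x] fun t => (t - x) ^ n * v t := huv
  have hsub : ∀ j : ℕ, ∀ᶠ t in nhds x,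
      iteratedDeriv j u t = iteratedDeriv j g t - iteratedDeriv j g' t := by
    intro j
    filter_upwards [hg.eventually_analyticAt, hg'.eventually_analyticAt] with t h h'
    exact iteratedDeriv_sub h.contDiffAt h'.contDiffAt
  -- the common `k`-jet forces the order of vanishing of `u` to exceed `k`
  have hkn : k < n := by
    by_contra! hnk
    obtain ⟨w, -, hwx, hw⟩ := iteratedDeriv_eventuallyEq_pow_mul hv hvx huv' n le_rfl
    have h1 := hw.self_of_nhds
    have h2 : iteratedDeriv n g x = iteratedDeriv n g' x := by
      simpa [jet] using congrFun hjet (Fin.succ (⟨n, by omega⟩ : Fin (k + 1)))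
    rw [(hsub n).self_of_nhds, h2] at h1
    simp at h1
    exact hwx h1.symm
  have hex : ∀ j : Fin (k + 1), ∃ w : ℂ → ℂ, AnalyticAt ℂ w x ∧ w x ≠ 0 ∧
      iteratedDeriv j u =ᶠ[nhds x] fun t => (t - x) ^ (n - j) * w t := fun j =>
    iteratedDeriv_eventuallyEq_pow_mul hv hvx huv' j (by omega)
  choose w hwa hwx hw using hex
  obtain ⟨Q, hQc, hQ, hQd⟩ := exists_continuous_difference_quotients P
  -- the expansion of `P(J g) - P(J g')` divided by `(t - x)ⁿ⁻ᵏ`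
  let S : ℂ → ℂ := fun t =>
    ∑ j : Fin (k + 1), Q j.succ (jet k g t, jet k g' t) * ((t - x) ^ (k - (j : ℕ)) * w j t)
  have hS : ∀ᶠ t in nhds x, (t - x) ^ (n - k) * S t = 0 := by
    filter_upwards [hP, hP', Filter.eventually_all.2 hw,
      Filter.eventually_all.2 fun j : Fin (k + 1) => hsub j] with t h1 h2 h3 h4
    have h := hQ (jet k g t) (jet k g' t)
    rw [h1, h2, Fin.sum_univ_succ] at h
    simp only [jet, Fin.cons_zero, Fin.cons_succ, sub_self, mul_zero, zero_add] at h
    rw [h, Finset.mul_sum]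
    refine Finset.sum_congr rfl fun j _ => ?_
    rw [← h4 j, h3 j, show n - (j : ℕ) = (n - k) + (k - j) by omega, pow_add]
    simp only [jet]
    ring
  have hSc : ContinuousAt S x := by
    refine tendsto_finsetSum _ fun j _ => ?_
    refine ContinuousAt.mul ?_ (ContinuousAt.mul ?_ (hwa j).continuousAt)
    · exact (hQc _).continuousAt.comp ((continuousAt_jet hg).prodMk (continuousAt_jet hg'))
    · fun_prop
  have hS0 : S x = 0 := by
    have hpunct : ∀ᶠ t in nhdsWithin x {x}ᶜ, S t = 0 := by
      filter_upwards [hS.filter_mono nhdsWithin_le_nhds, self_mem_nhdsWithin] with t ht htx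
      exact (mul_eq_zero.1 ht).resolve_left (pow_ne_zero _ (sub_ne_zero.2 htx))
    exact tendsto_nhds_unique (hSc.tendsto.mono_left nhdsWithin_le_nhds)
      (tendsto_const_nhds.congr' (hpunct.mono fun t ht => ht.symm))
  -- only the term `j = k` survives at `t = x`
  have hSx : S x = eval (jet k g x) (pderiv (Fin.last (k + 1)) P) * w (Fin.last k) x := by
    simp only [S]
    rw [Fin.sum_univ_castSucc, Finset.sum_eq_zero, ← hjet, hQd]
    · simp
    · intro j _
      rw [sub_self, zero_pow (by have := j.2; simp; omega)]
      simp
  exact mul_ne_zero hPz (hwx _) (hSx.symm.trans hS0)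

/-- Polynomials in `x, y` regarded as polynomials in `y` with coefficients in `ℂ[x]`. -/
noncomputable def toPolyY :
    MvPolynomial (Fin 2) ℂ ≃ₐ[ℂ] Polynomial (MvPolynomial (Fin 1) ℂ) :=
  (renameEquiv ℂ (Equiv.swap 0 1)).trans (finSuccEquiv ℂ 1)

lemma eval_toPolyY (f : MvPolynomial (Fin 2) ℂ) (a b : ℂ) :
    Polynomial.eval b (Polynomial.map (eval ![a]) (toPolyY f)) = eval ![a, b] f := by
  have h := eval_eq_eval_mv_eval' ![a] b (rename (Equiv.swap (0 : Fin 2) 1) f)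
  rw [eval_rename] at h
  change _ = Polynomial.eval b (Polynomial.map (eval ![a]) (toPolyY f)) at h
  rw [← h]
  congr 2
  funext i
  fin_cases i <;> simp

lemma eq_zero_of_infinite_zeros {r : MvPolynomial (Fin 1) ℂ} {T : Set ℂ} (hT : T.Infinite)
    (h : ∀ t ∈ T, eval ![t] r = 0) : r = 0 := by
  refine MvPolynomial.funext_set (fun _ => T) (fun _ => hT) fun s hs => ?_
  have : s = ![s 0] := by
    funext i
    fin_cases i
    rfl
  rw [this, h _ (hs 0 trivial), map_zero]

/-- By Gauss's lemma, an irreducible `F ∈ R[Y]` of positive degree stays irreducible over the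
fraction field of `R`. If it does not divide `F'`, the two are coprime there, and clearing
denominators in a Bézout identity leaves a nonzero constant in the ideal they generate. -/
lemma exists_bezout_of_not_dvd {R : Type*} [CommRing R] [IsDomain R] [UniqueFactorizationMonoid R]
    {F F' : Polynomial R} (hF : Irreducible F) (hdeg : F.natDegree ≠ 0) (hnd : ¬F ∣ F') :
    ∃ (A B : Polynomial R) (r : R), r ≠ 0 ∧ A * F + B * F' = Polynomial.C r := by
  classical
  have hprim := hF.isPrimitive hdeg
  let _ : NormalizedGCDMonoid R := Classical.choice inferInstance
  have hirrK : Irreducible (F.map (algebraMap R (FractionRing R))) :=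
    hprim.irreducible_iff_irreducible_map_fraction_map.1 hF
  obtain ⟨a, b, hab⟩ := hirrK.coprime_iff_not_dvd.2 fun hd =>
    hnd (hprim.dvd_of_fraction_map_dvd_fraction_map hd)
  obtain ⟨c, hc0, hc⟩ := IsLocalization.integerNormalization_spec (nonZeroDivisors R) a
  obtain ⟨d, hd0, hd⟩ := IsLocalization.integerNormalization_spec (nonZeroDivisors R) b
  generalize IsLocalization.integerNormalization (nonZeroDivisors R) a = A at hc
  generalize IsLocalization.integerNormalization (nonZeroDivisors R) b = B at hd
  refine ⟨Polynomial.C d * A, Polynomial.C c * B, c * d,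
    mul_ne_zero (nonZeroDivisors.ne_zero hc0) (nonZeroDivisors.ne_zero hd0), ?_⟩
  apply Polynomial.map_injective (algebraMap R (FractionRing R))
    (IsFractionRing.injective R (FractionRing R))
  have hsmul : ∀ (s : R) (p : Polynomial (FractionRing R)),
      s • p = Polynomial.C (algebraMap R (FractionRing R) s) * p := fun s p => by
    rw [← Polynomial.smul_eq_C_mul, algebraMap_smul]
  rw [hsmul] at hc hd
  simp only [Polynomial.map_add, Polynomial.map_mul, Polynomial.map_C, hc, hd, map_mul]
  linear_combination (Polynomial.C (algebraMap R (FractionRing R) c) *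
    Polynomial.C (algebraMap R (FractionRing R) d)) * hab

/-- If an irreducible `f` and a polynomial `f'` have common zeros over infinitely many abscissas,
then `f ∣ f'`. Otherwise some nonzero `r ∈ ℂ[x]` would lie in the ideal they generate, and hence
vanish at all those abscissas. -/
lemma dvd_of_infinite_common_zeros {f f' : MvPolynomial (Fin 2) ℂ} (hf : Irreducible f)
    {T : Set ℂ} (hT : T.Infinite) {g : ℂ → ℂ} (h : ∀ t ∈ T, eval ![t, g t] f = 0)
    (h' : ∀ t ∈ T, eval ![t, g t] f' = 0) : f ∣ f' := by
  rw [← map_dvd_iff toPolyY]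
  set F := toPolyY f with hF
  set F' := toPolyY f' with hF'
  have hFirr : Irreducible F := (MulEquiv.irreducible_iff toPolyY).2 hf
  simp only [← eval_toPolyY, ← hF, ← hF'] at h h'
  have hdeg : F.natDegree ≠ 0 := by
    intro h0
    obtain ⟨c, hc⟩ := Polynomial.natDegree_eq_zero.1 h0
    have : c = 0 := eq_zero_of_infinite_zeros hT fun t ht => by simpa [← hc] using h t ht
    exact hFirr.ne_zero (by rw [← hc, this, map_zero])
  by_contra hnd
  obtain ⟨A, B, r, hr, hbez⟩ := exists_bezout_of_not_dvd hFirr hdeg hnd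
  refine hr (eq_zero_of_infinite_zeros hT fun t ht => ?_)
  have := congrArg (fun p => Polynomial.eval (g t) (Polynomial.map (eval ![t]) p)) hbez
  simpa [h t ht, h' t ht] using this.symm

/-- Near the base point of a graph chart, the graph lies on the curve and its jets lie on the
lift. -/
lemma IsKthLift.eventually_jet_mem {k : ℕ} {γ : Set (Fin 2 → ℂ)} {L : Set (Fin (k + 2) → ℂ)}
    (hL : IsKthLift k γ L) {x : ℂ} {U : Set (Fin 2 → ℂ)} {V : Set ℂ} {g : ℂ → ℂ}
    (hU : IsOpen U) (hxU : ![x, g x] ∈ U) (hV : V ∈ nhds x) (hg : AnalyticOnNhd ℂ g V)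
    (hγ : γ ∩ U = {r | r ∈ U ∧ r 0 ∈ V ∧ r 1 = g (r 0)}) :
    ∀ᶠ t in nhds x, ![t, g t] ∈ γ ∧ jet k g t ∈ L := by
  have hc : ContinuousAt (fun t => ![t, g t]) x := by
    refine continuousAt_pi.2 fun i => ?_
    fin_cases i
    · exact continuousAt_id
    · exact (hg x (mem_of_mem_nhds hV)).continuousAt
  filter_upwards [hV, hc.preimage_mem_nhds (hU.mem_nhds hxU)] with t htV htU
  refine ⟨?_, ?_⟩
  · have : ![t, g t] ∈ γ ∩ U := by
      rw [hγ]
      exact ⟨htU, by simpa using htV, by simp⟩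
    exact this.1
  · refine (hL x U V g hU hV hg hγ t htV htU _ rfl ?_).2 fun j => ?_
    · rw [← Fin.succ_zero_eq_one]
      simp [jet]
    · simp [jet]

/-- A point of the lift over the base point of a graph chart is the jet of the graph there. -/
lemma IsKthLift.eq_jet {k : ℕ} {γ : Set (Fin 2 → ℂ)} {L : Set (Fin (k + 2) → ℂ)}
    (hL : IsKthLift k γ L) {U : Set (Fin 2 → ℂ)} {V : Set ℂ} {g : ℂ → ℂ}
    {q : Fin (k + 2) → ℂ} (hq : q ∈ L) (hU : IsOpen U) (hqU : ![q 0, q 1] ∈ U)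
    (hV : V ∈ nhds (q 0)) (hg : AnalyticOnNhd ℂ g V) (hgq : g (q 0) = q 1)
    (hγ : γ ∩ U = {r | r ∈ U ∧ r 0 ∈ V ∧ r 1 = g (r 0)}) : q = jet k g (q 0) := by
  have h := (hL (q 0) U V g hU hV hg hγ (q 0) (mem_of_mem_nhds hV) (by rwa [hgq]) q rfl
    hgq.symm).1 hq
  funext i
  refine Fin.cases rfl (fun i => ?_) i
  refine Fin.cases ?_ (fun j => ?_) i
  · simp [jet, hgq]
  · simp [jet, h j]

/-- tangency data determines the curve: let `γ, γ̃` be irreducible plane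
curves whose `k`-th order lifts are contained in `Z(P)`.  If the lifts meet at a point
`q = (x, y, z₁, …, z_k)` lying over a smooth point `(x,y)` of both curves where neither
has vertical tangent (i.e. both are local holomorphic graphs there), and
`∂P/∂z_k (q) ≠ 0`, then `γ = γ̃`. -/
theorem tangency_data_determines_curve (k : ℕ) (hk : 1 ≤ k)
    (P : MvPolynomial (Fin (k + 2)) ℂ)
    (γ γ' : Set (Fin 2 → ℂ))
    (f f' : MvPolynomial (Fin 2) ℂ) (hf : Irreducible f) (hf' : Irreducible f')
    (hγ : γ = {p : Fin 2 → ℂ | eval p f = 0})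
    (hγ' : γ' = {p : Fin 2 → ℂ | eval p f' = 0})
    (L L' : Set (Fin (k + 2) → ℂ))
    (hL : IsKthLift k γ L) (hL' : IsKthLift k γ' L')
    (hLP : L ⊆ {q | eval q P = 0}) (hL'P : L' ⊆ {q | eval q P = 0})
    (q : Fin (k + 2) → ℂ) (hq : q ∈ L ∩ L')
    (hsm : ∃ (U : Set (Fin 2 → ℂ)) (V : Set ℂ) (g : ℂ → ℂ),
      IsOpen U ∧ ![q 0, q 1] ∈ U ∧ V ∈ nhds (q 0) ∧ AnalyticOnNhd ℂ g V ∧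
      g (q 0) = q 1 ∧ γ ∩ U = {r | r ∈ U ∧ r 0 ∈ V ∧ r 1 = g (r 0)})
    (hsm' : ∃ (U : Set (Fin 2 → ℂ)) (V : Set ℂ) (g : ℂ → ℂ),
      IsOpen U ∧ ![q 0, q 1] ∈ U ∧ V ∈ nhds (q 0) ∧ AnalyticOnNhd ℂ g V ∧
      g (q 0) = q 1 ∧ γ' ∩ U = {r | r ∈ U ∧ r 0 ∈ V ∧ r 1 = g (r 0)})
    (hPz : eval q (pderiv (Fin.last (k + 1)) P) ≠ 0) :
    γ = γ' := by
  obtain ⟨U, V, g, hU, hqU, hV, hg, hgq, hγU⟩ := hsm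
  obtain ⟨U', V', g', hU', hqU', hV', hg', hgq', hγU'⟩ := hsm'
  have hj := hL.eq_jet hq.1 hU hqU hV hg hgq hγU
  have hj' := hL'.eq_jet hq.2 hU' hqU' hV' hg' hgq' hγU'
  have hev := hL.eventually_jet_mem hU (by rwa [hgq]) hV hg hγU
  have hev' := hL'.eventually_jet_mem hU' (by rwa [hgq']) hV' hg' hγU'
  have heq : ∀ᶠ t in nhds (q 0), g t = g' t :=
    eventuallyEq_of_implicit_ode (hg _ (mem_of_mem_nhds hV)) (hg' _ (mem_of_mem_nhds hV'))
      (hj.symm.trans hj') (hev.mono fun t ht => hLP ht.2) (hev'.mono fun t ht => hL'P ht.2)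
      (by rwa [← hj])
  have hcommon : ∀ᶠ t in nhds (q 0), eval ![t, g t] f = 0 ∧ eval ![t, g t] f' = 0 := by
    filter_upwards [hev, hev', heq] with t h h' ht
    have h1 := h.1
    have h2 := h'.1
    rw [hγ] at h1
    rw [hγ', ← ht] at h2
    exact ⟨h1, h2⟩
  have hinf : {t | eval ![t, g t] f = 0 ∧ eval ![t, g t] f' = 0}.Infinite :=
    infinite_of_mem_nhds (q 0) hcommon
  have hd : f ∣ f' := dvd_of_infinite_common_zeros hf hinf (fun t ht => ht.1) fun t ht => ht.2
  have hd' : f' ∣ f := dvd_of_infinite_common_zeros hf' hinf (fun t ht => ht.2) fun t ht => ht.1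
  rw [hγ, hγ']
  ext p
  exact ⟨fun hp => zero_dvd_iff.1 (hp ▸ map_dvd (eval p) hd),
    fun hp => zero_dvd_iff.1 (hp ▸ map_dvd (eval p) hd')⟩
end
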